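/- arXiv:0811.2719 — 2 statements merged into one kernel-verified Lean document; each statement's English description precedes it below -/
import Mathlib

section
/- Let W be a complex vector space of dimension 2m with m ≥ 1, Ω a nondegenerate alternating bilinear form on W, and sp(Ω) = {A ∈ End(W) : Ω(Ax,y) + Ω(x,Ay) = 0}. Consider the Lie subalgebra 𝔤 = {A ⊗ id_{ℂ²} + id_W ⊗ C : A ∈ sp(Ω), C ∈ sl(2,ℂ)} of End(W ⊗ ℂ²). Then 𝔤 is a skew-Berger algebra. -/
open TensorProduct

/-- A skew-curvature tensor of type `h`. -/
def IsSkewCurv {V : Type*} [AddCommGroup V] [Module ℂ V]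
    (h : Submodule ℂ (Module.End ℂ V)) (R : V →ₗ[ℂ] V →ₗ[ℂ] Module.End ℂ V) : Prop :=
  (∀ x y, R x y = R y x) ∧ (∀ x y, R x y ∈ h) ∧
  (∀ x y z, R x y z + R y z x + R z x y = 0)

/-- `h` is a skew-Berger algebra. -/
def IsSkewBerger {V : Type*} [AddCommGroup V] [Module ℂ V]
    (h : Submodule ℂ (Module.End ℂ V)) : Prop :=
  h = Submodule.span ℂ
    {T | ∃ R : V →ₗ[ℂ] V →ₗ[ℂ] Module.End ℂ V,
      IsSkewCurv h R ∧ ∃ x y : V, T = R x y}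

noncomputable section

namespace SkewAux

variable {W : Type*} [AddCommGroup W] [Module ℂ W]

/-- `circ Ω a b z = Ω a z • b + Ω b z • a`. -/
def circ (Ω : W →ₗ[ℂ] W →ₗ[ℂ] ℂ) : W →ₗ[ℂ] W →ₗ[ℂ] Module.End ℂ W :=
  LinearMap.mk₂ ℂ (fun a b => (Ω a).smulRight b + (Ω b).smulRight a)
    (by intros; ext; simp; module) (by intros; ext; simp; module)
    (by intros; ext; simp; module) (by intros; ext; simp; module)

@[simp] lemma circ_apply (Ω : W →ₗ[ℂ] W →ₗ[ℂ] ℂ) (a b z : W) :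
    circ Ω a b z = Ω a z • b + Ω b z • a := rfl

/-- The `sp`-component of the curvature tensor. -/
def Phi (Ω : W →ₗ[ℂ] W →ₗ[ℂ] ℂ) (A : Module.End ℂ W) : W →ₗ[ℂ] W →ₗ[ℂ] Module.End ℂ W :=
  LinearMap.mk₂ ℂ (fun a b => circ Ω (A b) a - circ Ω (A a) b - Ω a b • A)
    (by intros; ext; simp; module) (by intros; ext; simp; module)
    (by intros; ext; simp; module) (by intros; ext; simp; module)

@[simp] lemma Phi_apply (Ω : W →ₗ[ℂ] W →ₗ[ℂ] ℂ) (A : Module.End ℂ W) (a b : W) :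
    Phi Ω A a b = circ Ω (A b) a - circ Ω (A a) b - Ω a b • A := rfl

/-- Membership in the symplectic algebra. -/
def sp (Ω : W →ₗ[ℂ] W →ₗ[ℂ] ℂ) : Submodule ℂ (Module.End ℂ W) where
  carrier := {A | ∀ x y : W, Ω (A x) y + Ω x (A y) = 0}
  zero_mem' := by simp
  add_mem' := by
    intro A B hA hB x y
    have h1 := hA x y
    have h2 := hB x y
    simp only [LinearMap.add_apply, map_add]
    linear_combination h1 + h2
  smul_mem' := by
    intro c A hA x y
    have h1 := hA x y
    simp only [LinearMap.smul_apply, map_smul, smul_eq_mul]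
    linear_combination c * h1

lemma skew {Ω : W →ₗ[ℂ] W →ₗ[ℂ] ℂ} (h : ∀ x : W, Ω x x = 0) (x y : W) : Ω x y = - Ω y x := by
  have := h (x + y)
  simp only [map_add, LinearMap.add_apply, h] at this
  linear_combination this

lemma circ_mem {Ω : W →ₗ[ℂ] W →ₗ[ℂ] ℂ} (h : ∀ x : W, Ω x x = 0) (a b : W) :
    circ Ω a b ∈ sp Ω := by
  intro x y
  simp only [circ_apply, map_add, LinearMap.add_apply, map_smul, LinearMap.smul_apply, smul_eq_mul]
  rw [skew h x a, skew h x b]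
  ring

lemma Phi_mem {Ω : W →ₗ[ℂ] W →ₗ[ℂ] ℂ} (h : ∀ x : W, Ω x x = 0) {A : Module.End ℂ W}
    (hA : A ∈ sp Ω) (a b : W) : Phi Ω A a b ∈ sp Ω :=
  (sp Ω).sub_mem ((sp Ω).sub_mem (circ_mem h _ _) (circ_mem h _ _)) ((sp Ω).smul_mem _ hA)

/-- The symplectic algebra is spanned by squares. -/
lemma sp_le [FiniteDimensional ℂ W] {Ω : W →ₗ[ℂ] W →ₗ[ℂ] ℂ} (h : ∀ x : W, Ω x x = 0)
    (hnd : ∀ x : W, (∀ y : W, Ω x y = 0) → x = 0) :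
    sp Ω ≤ Submodule.span ℂ (Set.range fun p : W => circ Ω p p) := by
  intro A hA
  have hc : ∀ a b, circ Ω a b ∈ Submodule.span ℂ (Set.range fun p : W => circ Ω p p) := by
    intro a b
    have e : circ Ω a b = (2⁻¹ : ℂ) • (circ Ω (a + b) (a + b) - circ Ω a a - circ Ω b b) := by
      ext z
      simp
      module
    rw [e]
    exact Submodule.smul_mem _ _ (Submodule.sub_mem _ (Submodule.sub_mem _
      (Submodule.subset_span ⟨_, rfl⟩) (Submodule.subset_span ⟨_, rfl⟩))
      (Submodule.subset_span ⟨_, rfl⟩))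
  have hinj : Function.Injective Ω := by
    rw [injective_iff_map_eq_zero]
    intro x hx
    exact hnd x (fun y => by rw [hx]; rfl)
  have hsurj : Function.Surjective Ω := by
    have : Module.finrank ℂ W = Module.finrank ℂ (Module.Dual ℂ W) :=
      (Subspace.dual_finrank_eq).symm
    exact (LinearMap.injective_iff_surjective_of_finrank_eq_finrank this).1 hinj
  let b := Module.finBasis ℂ W
  choose d hd using fun i => hsurj (b.coord i)
  have e1 : ∀ z, ∑ i, Ω (d i) z • b i = z := by
    intro z
    simp only [hd, Module.Basis.coord_apply]
    exact b.sum_repr z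
  have e2 : ∀ z, ∑ i, Ω (b i) z • d i = -z := by
    intro z
    apply hinj
    apply LinearMap.ext
    intro y
    conv_rhs => rw [← e1 y]
    simp only [map_sum, map_smul, LinearMap.sum_apply, LinearMap.smul_apply, smul_eq_mul, map_neg,
      LinearMap.neg_apply]
    try rw [← Finset.sum_neg_distrib]
    refine Finset.sum_congr rfl fun i _ => ?_
    rw [skew h (b i) z]
    ring
  have e : A = (-2⁻¹ : ℂ) • ∑ i, circ Ω (b i) (A (d i)) := by
    ext z
    have h1 : ∑ i, Ω (A (d i)) z • b i = - A z := by
      rw [← e1 (A z), ← Finset.sum_neg_distrib]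
      refine Finset.sum_congr rfl fun i _ => ?_
      rw [← neg_smul]
      congr 1
      linear_combination hA (d i) z
    have h2 : ∑ i, Ω (b i) z • A (d i) = - A z := by
      have := congrArg A (e2 z)
      simpa only [map_sum, map_smul, map_neg] using this
    simp only [LinearMap.smul_apply, LinearMap.sum_apply, circ_apply, Finset.sum_add_distrib, h1, h2]
    module
  rw [e]
  exact Submodule.smul_mem _ _ (Submodule.sum_mem _ fun i _ => hc _ _)

/-- The standard area form on the plane. -/
def om : (Fin 2 → ℂ) →ₗ[ℂ] (Fin 2 → ℂ) →ₗ[ℂ] ℂ :=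
  LinearMap.mk₂ ℂ (fun u v => u 0 * v 1 - u 1 * v 0)
    (by intros; simp; ring) (by intros; simp; ring)
    (by intros; simp; ring) (by intros; simp; ring)

lemma om_apply (u v : Fin 2 → ℂ) : om u v = u 0 * v 1 - u 1 * v 0 := rfl

lemma om_self (u : Fin 2 → ℂ) : om u u = 0 := by rw [om_apply]; ring

lemma om_nd (u : Fin 2 → ℂ) (h : ∀ v, om u v = 0) : u = 0 := by
  have h0 := h ![0, 1]
  have h1 := h ![1, 0]
  simp [om_apply] at h0 h1
  ext i
  fin_cases i <;> simp [h0, h1]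

lemma om_cyc (u v w : Fin 2 → ℂ) : om u v • w = - om v w • u - om w u • v := by
  ext i
  fin_cases i <;> simp [om_apply] <;> ring

lemma trace_eq (C : Module.End ℂ (Fin 2 → ℂ)) :
    LinearMap.trace ℂ (Fin 2 → ℂ) C = C (Pi.single 0 1) 0 + C (Pi.single 1 1) 1 := by
  rw [LinearMap.trace_eq_matrix_trace ℂ (Pi.basisFun ℂ (Fin 2))]
  simp [Matrix.trace]

lemma mem_sp_om (C : Module.End ℂ (Fin 2 → ℂ)) :
    C ∈ sp om ↔ LinearMap.trace ℂ (Fin 2 → ℂ) C = 0 := by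
  rw [trace_eq]
  constructor
  · intro h
    have := h (Pi.single 0 1) (Pi.single 1 1)
    simpa [om_apply] using this
  · intro h x y
    have hx : ∀ x : Fin 2 → ℂ, x = x 0 • Pi.single 0 1 + x 1 • Pi.single 1 1 := by
      intro x
      ext i
      fin_cases i <;> simp
    have hC : ∀ x : Fin 2 → ℂ, C x = x 0 • C (Pi.single 0 1) + x 1 • C (Pi.single 1 1) := by
      intro x
      conv_lhs => rw [hx x]
      simp only [map_add, map_smul]
    rw [hC x, hC y]
    simp only [om_apply, Pi.add_apply, Pi.smul_apply, smul_eq_mul]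
    linear_combination (x 0 * y 1 - x 1 * y 0) * h

/-- The curvature tensor attached to `A`. -/
def Rt (Ω : W →ₗ[ℂ] W →ₗ[ℂ] ℂ) (A : Module.End ℂ W) :
    (W ⊗[ℂ] (Fin 2 → ℂ)) →ₗ[ℂ] (W ⊗[ℂ] (Fin 2 → ℂ)) →ₗ[ℂ]
      Module.End ℂ (W ⊗[ℂ] (Fin 2 → ℂ)) :=
  (TensorProduct.map₂ (Phi Ω A)
    (om.compr₂ (LinearMap.toSpanSingleton ℂ (Module.End ℂ (Fin 2 → ℂ)) LinearMap.id))).compr₂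
      (TensorProduct.homTensorHomMap (.id ℂ) W (Fin 2 → ℂ) W (Fin 2 → ℂ)) +
  (TensorProduct.map₂ ((Ω ∘ₗ A).compr₂
    (LinearMap.toSpanSingleton ℂ (Module.End ℂ W) LinearMap.id)) (circ om)).compr₂
      (TensorProduct.homTensorHomMap (.id ℂ) W (Fin 2 → ℂ) W (Fin 2 → ℂ))

lemma Rt_apply (Ω : W →ₗ[ℂ] W →ₗ[ℂ] ℂ) (A : Module.End ℂ W) (w w' : W) (u u' : Fin 2 → ℂ) :
    Rt Ω A (w ⊗ₜ u) (w' ⊗ₜ u') =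
      TensorProduct.map (om u u' • Phi Ω A w w') LinearMap.id +
      TensorProduct.map LinearMap.id (Ω (A w) w' • circ om u u') := by
  ext
  simp [Rt, TensorProduct.smul_tmul, TensorProduct.tmul_smul]
  simp only [← smul_add, TensorProduct.tmul_smul]

lemma Rt_skewCurv {Ω : W →ₗ[ℂ] W →ₗ[ℂ] ℂ} (h : ∀ x : W, Ω x x = 0) {A : Module.End ℂ W}
    (hA : A ∈ sp Ω) (g : Submodule ℂ (Module.End ℂ (W ⊗[ℂ] (Fin 2 → ℂ))))
    (hg : ∀ A ∈ sp Ω, ∀ C ∈ sp om, TensorProduct.map A LinearMap.id +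
      TensorProduct.map LinearMap.id C ∈ g) : IsSkewCurv g (Rt Ω A) := by
  have hAs : ∀ a b, Ω (A a) b = Ω (A b) a := by
    intro a b
    rw [skew h (A b) a]
    linear_combination hA a b
  refine ⟨fun x y => ?_, fun x y => ?_, fun x y z => ?_⟩
  · induction x with
    | zero => simp
    | add x x' h1 h2 => simp only [map_add, LinearMap.add_apply, h1, h2]
    | tmul w u =>
      induction y with
      | zero => simp
      | add x x' h1 h2 => simp only [map_add, LinearMap.add_apply, h1, h2]
      | tmul w' u' =>
        rw [Rt_apply, Rt_apply]
        congr 2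
        · rw [skew om_self u u']
          ext z
          simp [skew h w w']
          module
        · rw [hAs w w']
          congr 1
          refine LinearMap.ext fun z => ?_
          simp only [circ_apply]
          exact add_comm _ _
  · induction x with
    | zero => simp
    | add x x' h1 h2 =>
      simp only [map_add, LinearMap.add_apply]
      exact g.add_mem h1 h2
    | tmul w u =>
      induction y with
      | zero => simp
      | add x x' h1 h2 =>
        simp only [map_add]
        exact g.add_mem h1 h2
      | tmul w' u' =>
        rw [Rt_apply]
        exact hg _ ((sp Ω).smul_mem _ (Phi_mem h hA _ _)) _
          ((sp om).smul_mem _ (circ_mem om_self _ _))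
  · induction x with
    | zero => simp
    | add x x' h1 h2 =>
      simp only [map_add, LinearMap.add_apply]
      rw [← add_zero (0 : W ⊗[ℂ] (Fin 2 → ℂ))]
      nth_rewrite 1 [← h1]
      rw [← h2]
      abel
    | tmul a u =>
      induction y with
      | zero => simp
      | add x x' h1 h2 =>
        simp only [map_add, LinearMap.add_apply]
        rw [← add_zero (0 : W ⊗[ℂ] (Fin 2 → ℂ))]
        nth_rewrite 1 [← h1]
        rw [← h2]
        abel
      | tmul b v =>
        induction z with
        | zero => simp
        | add x x' h1 h2 =>
          simp only [map_add, LinearMap.add_apply]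
          rw [← add_zero (0 : W ⊗[ℂ] (Fin 2 → ℂ))]
          nth_rewrite 1 [← h1]
          rw [← h2]
          abel
        | tmul c w =>
          have key : Rt Ω A (a ⊗ₜ u) (b ⊗ₜ v) (c ⊗ₜ w) + Rt Ω A (b ⊗ₜ v) (c ⊗ₜ w) (a ⊗ₜ u)
              + Rt Ω A (c ⊗ₜ w) (a ⊗ₜ u) (b ⊗ₜ v) =
              (Phi Ω A a b c) ⊗ₜ[ℂ] (om u v • w) + (Phi Ω A b c a) ⊗ₜ[ℂ] (om v w • u) +
              (Phi Ω A c a b) ⊗ₜ[ℂ] (om w u • v) +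
              (Ω (A a) b • c) ⊗ₜ[ℂ] (om v w • u - om w u • v) +
              (Ω (A b) c • a) ⊗ₜ[ℂ] (om w u • v - om u v • w) +
              (Ω (A c) a • b) ⊗ₜ[ℂ] (om u v • w - om v w • u) := by
            simp only [Rt_apply, LinearMap.add_apply, TensorProduct.map_tmul, LinearMap.id_apply,
              LinearMap.smul_apply, circ_apply (Ω := om), TensorProduct.smul_tmul,
              TensorProduct.tmul_smul, TensorProduct.tmul_add, TensorProduct.tmul_sub]
            rw [skew om_self u w, skew om_self v u, skew om_self w v]
            module
          rw [key, om_cyc u v w]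
          have k2 : ∀ (p q r s t k : W) (U V : Fin 2 → ℂ), q - p + s + t - (2 : ℂ) • k = 0 →
              r - p - s + (2 : ℂ) • t - k = 0 → 
              p ⊗ₜ[ℂ] (-U - V) + q ⊗ₜ[ℂ] U + r ⊗ₜ[ℂ] V + s ⊗ₜ[ℂ] (U - V) +
              t ⊗ₜ[ℂ] (V - (-U - V)) + k ⊗ₜ[ℂ] (-U - V - U) = 0 := by
            intro p q r s t k U V e1 e2
            have : p ⊗ₜ[ℂ] (-U - V) + q ⊗ₜ[ℂ] U + r ⊗ₜ[ℂ] V + s ⊗ₜ[ℂ] (U - V) +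
              t ⊗ₜ[ℂ] (V - (-U - V)) + k ⊗ₜ[ℂ] (-U - V - U) =
              (q - p + s + t - (2 : ℂ) • k) ⊗ₜ[ℂ] U +
              (r - p - s + (2 : ℂ) • t - k) ⊗ₜ[ℂ] V := by
              simp only [TensorProduct.tmul_sub, TensorProduct.add_tmul,
                TensorProduct.sub_tmul, TensorProduct.tmul_neg, ← TensorProduct.smul_tmul']
              module
            rw [this, e1, e2]
            simp
          rw [neg_smul]
          apply k2
          · simp only [Phi_apply, LinearMap.sub_apply, circ_apply, LinearMap.smul_apply]
            simp only [skew h c a, skew h b a, skew h c b, hAs c b, hAs c a, hAs b a]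
            module
          · simp only [Phi_apply, LinearMap.sub_apply, circ_apply, LinearMap.smul_apply]
            simp only [skew h c a, skew h b a, skew h c b, hAs c b, hAs c a, hAs b a]
            module

end SkewAux

end

/-- for a nondegenerate alternating form `Ω` on a `2m`-dimensional
complex vector space `W` (`m ≥ 1`), the Lie algebra
`sp(Ω) ⊗ id + id ⊗ sl(2,ℂ) ⊆ End(W ⊗ ℂ²)` is a skew-Berger algebra. -/
theorem stmt5 {W : Type*} [AddCommGroup W] [Module ℂ W] [FiniteDimensional ℂ W]
    (m : ℕ) (hm : 1 ≤ m) (hdim : Module.finrank ℂ W = 2 * m)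
    (Ω : W →ₗ[ℂ] W →ₗ[ℂ] ℂ)
    (hΩalt : ∀ x : W, Ω x x = 0)
    (hΩnd : ∀ x : W, (∀ y : W, Ω x y = 0) → x = 0)
    (g : Submodule ℂ (Module.End ℂ (W ⊗[ℂ] (Fin 2 → ℂ))))
    (hg : g = Submodule.span ℂ
      {T : Module.End ℂ (W ⊗[ℂ] (Fin 2 → ℂ)) |
        ∃ A : Module.End ℂ W, ∃ C : Module.End ℂ (Fin 2 → ℂ),
          (∀ x y : W, Ω (A x) y + Ω x (A y) = 0) ∧
          LinearMap.trace ℂ (Fin 2 → ℂ) C = 0 ∧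
          T = TensorProduct.map A LinearMap.id + TensorProduct.map LinearMap.id C}) :
    IsSkewBerger g := by
  classical
  have hmem : ∀ A ∈ SkewAux.sp Ω, ∀ C ∈ SkewAux.sp SkewAux.om,
      TensorProduct.map A LinearMap.id + TensorProduct.map LinearMap.id C ∈ g := by
    intro A hA C hC
    rw [hg]
    exact Submodule.subset_span ⟨A, C, hA, (SkewAux.mem_sp_om C).1 hC, rfl⟩
  have hR : ∀ A ∈ SkewAux.sp Ω, IsSkewCurv g (SkewAux.Rt Ω A) := fun A hA =>
    SkewAux.Rt_skewCurv hΩalt hA g hmem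
  have hq : ∀ p : W, p ≠ 0 → ∃ q, Ω p q = 1 := by
    intro p hp
    by_contra! hcon
    apply hp
    apply hΩnd
    intro y
    by_contra hy
    apply hcon ((Ω p y)⁻¹ • y)
    simp [hy]
  have hpm : ∀ p : W, (2⁻¹ : ℂ) • SkewAux.circ Ω p p ∈ SkewAux.sp Ω := fun p =>
    (SkewAux.sp Ω).smul_mem _ (SkewAux.circ_mem hΩalt p p)
  unfold IsSkewBerger
  set S := Submodule.span ℂ {T | ∃ R : (W ⊗[ℂ] (Fin 2 → ℂ)) →ₗ[ℂ] (W ⊗[ℂ] (Fin 2 → ℂ)) →ₗ[ℂ]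
      Module.End ℂ (W ⊗[ℂ] (Fin 2 → ℂ)),
      IsSkewCurv g R ∧ ∃ x y, T = R x y} with hS
  apply le_antisymm
  swap
  · rw [hS, Submodule.span_le]
    rintro T ⟨R, h, x, y, rfl⟩
    exact h.2.1 x y
  have h1 : SkewAux.sp Ω ≤ S.comap (LinearMap.rTensorHom (Fin 2 → ℂ)) := by
    refine (SkewAux.sp_le hΩalt hΩnd).trans ?_
    rw [Submodule.span_le]
    rintro _ ⟨p, rfl⟩
    by_cases hp : p = 0
    · subst hp
      simp
    obtain ⟨q, hpq⟩ := hq p hp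
    have e : SkewAux.Rt Ω ((2⁻¹ : ℂ) • SkewAux.circ Ω p p) (p ⊗ₜ (Pi.single 0 1))
        (q ⊗ₜ (Pi.single 1 1)) =
        (2⁻¹ : ℂ) • LinearMap.rTensorHom (Fin 2 → ℂ) (SkewAux.circ Ω p p) := by
      rw [SkewAux.Rt_apply, ← LinearMap.map_smul (LinearMap.rTensorHom (Fin 2 → ℂ))]
      have e1 : SkewAux.Phi Ω ((2⁻¹ : ℂ) • SkewAux.circ Ω p p) p q =
          (2⁻¹ : ℂ) • SkewAux.circ Ω p p := by
        ext z
        simp [hpq, hΩalt]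
      rw [e1]
      simp [SkewAux.om_apply, hΩalt, LinearMap.rTensor, TensorProduct.map_smul_left]
    have e2 : LinearMap.rTensorHom (Fin 2 → ℂ) (SkewAux.circ Ω p p) = (2 : ℂ) •
        SkewAux.Rt Ω ((2⁻¹ : ℂ) • SkewAux.circ Ω p p) (p ⊗ₜ (Pi.single 0 1))
        (q ⊗ₜ (Pi.single 1 1)) := by
      rw [e, smul_smul]
      norm_num
    change LinearMap.rTensorHom (Fin 2 → ℂ) (SkewAux.circ Ω p p) ∈ S
    rw [e2]
    exact S.smul_mem _ (Submodule.subset_span ⟨_, hR _ (hpm p), _, _, rfl⟩)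
  have h2 : SkewAux.sp SkewAux.om ≤ S.comap (LinearMap.lTensorHom W) := by
    refine (SkewAux.sp_le SkewAux.om_self SkewAux.om_nd).trans ?_
    rw [Submodule.span_le]
    rintro _ ⟨u, rfl⟩
    have : Nontrivial W := Module.nontrivial_of_finrank_pos (R := ℂ) (by omega)
    obtain ⟨p, hp⟩ := exists_ne (0 : W)
    obtain ⟨q, hpq⟩ := hq p hp
    have e : LinearMap.lTensorHom W (SkewAux.circ SkewAux.om u u) =
        SkewAux.Rt Ω ((2⁻¹ : ℂ) • SkewAux.circ Ω p p) (q ⊗ₜ u) (q ⊗ₜ u) := by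
      rw [SkewAux.Rt_apply, SkewAux.om_self]
      have e1 : Ω (((2⁻¹ : ℂ) • SkewAux.circ Ω p p) q) q = 1 := by
        simp [hpq]
        norm_num
      rw [e1]
      simp [LinearMap.lTensor]
    change LinearMap.lTensorHom W (SkewAux.circ SkewAux.om u u) ∈ S
    rw [e]
    exact Submodule.subset_span ⟨_, hR _ (hpm p), _, _, rfl⟩
  rw [hg, Submodule.span_le]
  rintro T ⟨A, C, hA, hC, rfl⟩
  exact S.add_mem (h1 hA) (h2 ((SkewAux.mem_sp_om C).2 hC))
end

section
/- Let n ≥ 3, m ≥ 2, U a complex vector space of dimension n with nondegenerate symmetric bilinear form B, W a complex vector space of dimension 2m with nondegenerate alternating bilinear form Ω, V = U ⊗ W, and 𝔤 = {A ⊗ id_W + id_U ⊗ C : A ∈ so(B), C ∈ sp(Ω)} ⊆ End(V). Then the space 𝓡̄(𝔤) of skew-curvature tensors of type 𝔤 is one-dimensional. -/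
open TensorProduct

section helpers

set_option linter.unusedSectionVars false

variable {U W : Type*}
    [AddCommGroup U] [Module ℂ U] [FiniteDimensional ℂ U]
    [AddCommGroup W] [Module ℂ W] [FiniteDimensional ℂ W]

lemma exists_onb (B : U →ₗ[ℂ] U →ₗ[ℂ] ℂ)
    (hBsymm : ∀ x y : U, B x y = B y x)
    (hBnd : ∀ x : U, (∀ y : U, B x y = 0) → x = 0) :
    ∃ e : Module.Basis (Fin (Module.finrank ℂ U)) ℂ U,
      ∀ i j, B (e i) (e j) = if i = j then 1 else 0 := by
  have hs : LinearMap.IsSymm B := ⟨fun x y => by simpa using hBsymm x y⟩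
  obtain ⟨v, hv⟩ := LinearMap.BilinForm.exists_orthogonal_basis hs
  have hv' : ∀ i j, i ≠ j → B (v i) (v j) = 0 := fun i j hij => hv hij
  have hne : ∀ i, B (v i) (v i) ≠ 0 := by
    intro i h0
    apply v.ne_zero i
    apply hBnd
    intro y
    have : B (v i) = 0 := by
      apply v.ext
      intro j
      by_cases hij : i = j
      · subst hij; simpa using h0
      · simpa using hv' i j hij
    rw [this]; rfl
  have hsq : ∀ i, ∃ s : ℂ, s * s = B (v i) (v i) := fun i => by
    obtain ⟨s, hs⟩ := IsAlgClosed.exists_eq_mul_self (B (v i) (v i))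
    exact ⟨s, hs.symm⟩
  choose s hs using hsq
  have hs0 : ∀ i, s i ≠ 0 := by
    intro i h0
    apply hne i
    rw [← hs, h0, zero_mul]
  refine ⟨v.isUnitSMul (w := fun i => (s i)⁻¹) (fun i => (IsUnit.mk0 _ (inv_ne_zero (hs0 i)))), ?_⟩
  intro i j
  simp only [Module.Basis.isUnitSMul_apply, map_smul, LinearMap.smul_apply, smul_eq_mul]
  split_ifs with hij
  · subst hij
    rw [← hs]
    have := hs0 i
    field_simp
  · simp [hv' i j hij]

lemma null_lemma (B : U →ₗ[ℂ] U →ₗ[ℂ] ℂ)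
    (hBsymm : ∀ x y : U, B x y = B y x)
    {ι : Type*} [DecidableEq ι] (e : Module.Basis ι ℂ U)
    (he : ∀ i j, B (e i) (e j) = if i = j then 1 else 0)
    (i₀ : ι)
    (b : U →ₗ[ℂ] U →ₗ[ℂ] ℂ) (hb : ∀ x y : U, b x y = b y x)
    (h0 : ∀ u, B u u = 0 → b u u = 0) (x y : U) :
    b x y = B x y * b (e i₀) (e i₀) := by
  have key : ∀ i j, i ≠ j → b (e i) (e j) = 0 ∧ b (e i) (e i) = b (e j) (e j) := by
    intro i j hij
    have h1 := h0 (e i + Complex.I • e j) (by simp [he, hij, hij.symm])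
    have h2 := h0 (e i - Complex.I • e j) (by simp [he, hij, hij.symm])
    simp only [map_add, map_sub, map_smul, LinearMap.add_apply, LinearMap.sub_apply,
      LinearMap.smul_apply, smul_eq_mul, hb (e j) (e i)] at h1 h2
    have hI := Complex.I_mul_I
    constructor
    · have : 4 * Complex.I * b (e i) (e j) = 0 := by linear_combination h1 - h2
      simpa [Complex.I_ne_zero] using this
    · linear_combination (h1 + h2)/2 - hI * b (e j) (e j)
  have : b = (b (e i₀) (e i₀)) • B := by
    apply e.ext; intro i
    apply e.ext; intro j
    simp only [LinearMap.smul_apply, he, smul_eq_mul]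
    by_cases hij : i = j
    · subst hij
      by_cases hi : i = i₀
      · simp [hi]
      · simpa using (key i i₀ hi).2
    · simpa [hij] using (key i j hij).1
  rw [this]
  simp [he, mul_comm]

/-- Components of a skew-curvature tensor. -/
structure Good (B : U →ₗ[ℂ] U →ₗ[ℂ] ℂ) (Ω : W →ₗ[ℂ] W →ₗ[ℂ] ℂ)
    (A : (U ⊗[ℂ] W) →ₗ[ℂ] (U ⊗[ℂ] W) →ₗ[ℂ] Module.End ℂ U)
    (C : (U ⊗[ℂ] W) →ₗ[ℂ] (U ⊗[ℂ] W) →ₗ[ℂ] Module.End ℂ W) : Prop where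
  symA : ∀ x y, A x y = A y x
  symC : ∀ x y, C x y = C y x
  so : ∀ x y u v, B (A x y u) v + B u (A x y v) = 0
  sp : ∀ x y u v, Ω (C x y u) v + Ω u (C x y v) = 0
  bianchi : ∀ (u₁ u₂ u₃ : U) (w₁ w₂ w₃ : W),
    A (u₁ ⊗ₜ w₁) (u₂ ⊗ₜ w₂) u₃ ⊗ₜ[ℂ] w₃ + u₃ ⊗ₜ[ℂ] C (u₁ ⊗ₜ w₁) (u₂ ⊗ₜ w₂) w₃
    + (A (u₂ ⊗ₜ w₂) (u₃ ⊗ₜ w₃) u₁ ⊗ₜ[ℂ] w₁ + u₁ ⊗ₜ[ℂ] C (u₂ ⊗ₜ w₂) (u₃ ⊗ₜ w₃) w₁)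
    + (A (u₃ ⊗ₜ w₃) (u₁ ⊗ₜ w₁) u₂ ⊗ₜ[ℂ] w₂ + u₂ ⊗ₜ[ℂ] C (u₃ ⊗ₜ w₃) (u₁ ⊗ₜ w₁) w₂) = 0

variable {B : U →ₗ[ℂ] U →ₗ[ℂ] ℂ} {Ω : W →ₗ[ℂ] W →ₗ[ℂ] ℂ}
    {A : (U ⊗[ℂ] W) →ₗ[ℂ] (U ⊗[ℂ] W) →ₗ[ℂ] Module.End ℂ U}
    {C : (U ⊗[ℂ] W) →ₗ[ℂ] (U ⊗[ℂ] W) →ₗ[ℂ] Module.End ℂ W}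

lemma Good.contractU (h : Good B Ω A C) (f : U →ₗ[ℂ] ℂ) (u₁ u₂ u₃ : U) (w₁ w₂ w₃ : W) :
    f (A (u₁ ⊗ₜ w₁) (u₂ ⊗ₜ w₂) u₃) • w₃ + f u₃ • C (u₁ ⊗ₜ w₁) (u₂ ⊗ₜ w₂) w₃
    + (f (A (u₂ ⊗ₜ w₂) (u₃ ⊗ₜ w₃) u₁) • w₁ + f u₁ • C (u₂ ⊗ₜ w₂) (u₃ ⊗ₜ w₃) w₁)
    + (f (A (u₃ ⊗ₜ w₃) (u₁ ⊗ₜ w₁) u₂) • w₂ + f u₂ • C (u₃ ⊗ₜ w₃) (u₁ ⊗ₜ w₁) w₂) = 0 := by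
  have := congrArg (fun t => TensorProduct.lid ℂ W (f.rTensor W t)) (h.bianchi u₁ u₂ u₃ w₁ w₂ w₃)
  simpa using this

lemma Good.contractW (h : Good B Ω A C) (g : W →ₗ[ℂ] ℂ) (u₁ u₂ u₃ : U) (w₁ w₂ w₃ : W) :
    g w₃ • A (u₁ ⊗ₜ w₁) (u₂ ⊗ₜ w₂) u₃ + g (C (u₁ ⊗ₜ w₁) (u₂ ⊗ₜ w₂) w₃) • u₃
    + (g w₁ • A (u₂ ⊗ₜ w₂) (u₃ ⊗ₜ w₃) u₁ + g (C (u₂ ⊗ₜ w₂) (u₃ ⊗ₜ w₃) w₁) • u₁)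
    + (g w₂ • A (u₃ ⊗ₜ w₃) (u₁ ⊗ₜ w₁) u₂ + g (C (u₃ ⊗ₜ w₃) (u₁ ⊗ₜ w₁) w₂) • u₂) = 0 := by
  have := congrArg (fun t => TensorProduct.rid ℂ U (g.lTensor U t)) (h.bianchi u₁ u₂ u₃ w₁ w₂ w₃)
  simpa using this

lemma exists_sep (hW : 4 ≤ Module.finrank ℂ W) (w₁ w₂ : W) :
    ∃ (g : W →ₗ[ℂ] ℂ) (w₃ : W), g w₁ = 0 ∧ g w₂ = 0 ∧ g w₃ = 1 := by
  have hlt : Submodule.span ℂ {w₁, w₂} < ⊤ := by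
    rw [lt_top_iff_ne_top]
    intro htop
    classical
    have h1 := finrank_span_finset_le_card (R := ℂ) ({w₁, w₂} : Finset W)
    have h2 : (({w₁, w₂} : Finset W)).card ≤ 2 := Finset.card_le_two
    rw [Finset.coe_insert, Finset.coe_singleton, Set.finrank, htop, finrank_top] at h1
    omega
  obtain ⟨g, hg, hle⟩ := Submodule.exists_le_ker_of_lt_top _ hlt
  obtain ⟨w, hw⟩ : ∃ w, g w ≠ 0 := by
    by_contra! hc
    exact hg (LinearMap.ext hc)
  refine ⟨g, (g w)⁻¹ • w, ?_, ?_, by simp [hw]⟩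
  · exact hle (Submodule.subset_span (by simp))
  · exact hle (Submodule.subset_span (by simp))

lemma Good.A_sq (h : Good B Ω A C) (hU : 3 ≤ Module.finrank ℂ U) (hW : 4 ≤ Module.finrank ℂ W)
    (hBsymm : ∀ x y : U, B x y = B y x)
    (hBnd : ∀ x : U, (∀ y : U, B x y = 0) → x = 0) (u : U) (w : W) :
    A (u ⊗ₜ w) (u ⊗ₜ w) = 0 := by
  obtain ⟨g, w₃, hg, -, hg3⟩ := exists_sep hW w w
  by_cases hu : u = 0
  · simp [hu]
  set T := A (u ⊗ₜ w) (u ⊗ₜ w) with hT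
  set s : ℂ := - g (C (u ⊗ₜ w) (u ⊗ₜ w) w₃)
  let φ : U →ₗ[ℂ] ℂ :=
    { toFun := fun v => -2 * g (C (u ⊗ₜ w) (v ⊗ₜ w₃) w)
      map_add' := by intro x y; simp [TensorProduct.add_tmul]; ring
      map_smul' := by intro c x; simp [← TensorProduct.smul_tmul']; ring }
  have hTv : ∀ v, T v = s • v + φ v • u := by
    intro v
    have := h.contractW g u u v w w w₃
    rw [h.symC (v ⊗ₜ w₃) (u ⊗ₜ w)] at this
    simp only [hg, hg3, zero_smul, one_smul, zero_add] at this
    simp only [s, φ, LinearMap.coe_mk, AddHom.coe_mk]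
    rw [← sub_eq_zero, ← this]
    module
  have hso : ∀ x y, 2 * s * B x y + φ x * B u y + φ y * B x u = 0 := by
    intro x y
    have := h.so (u ⊗ₜ w) (u ⊗ₜ w) x y
    rw [← hT, hTv, hTv] at this
    simp only [map_add, map_smul, LinearMap.add_apply, LinearMap.smul_apply, smul_eq_mul] at this
    linear_combination this
  obtain ⟨v, hv, hv0⟩ : ∃ v ∈ LinearMap.ker (φ.prod (B u)), v ≠ 0 := by
    apply Submodule.exists_mem_ne_zero_of_ne_bot
    apply LinearMap.ker_ne_bot_of_finrank_lt
    simp; omega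
  replace hv : φ v = 0 ∧ B u v = 0 := by
    have hv2 : (φ v, B u v) = (0 : ℂ × ℂ) := hv
    simpa using hv2
  have hs0 : s = 0 := by
    by_contra hs
    apply hv0
    apply hBnd
    intro y
    have := hso v y
    rw [hv.1, hBsymm v u, hv.2] at this
    simpa [hs] using this
  obtain ⟨y, hy⟩ : ∃ y, B u y ≠ 0 := by
    by_contra! hc
    exact hu (hBnd u hc)
  have hφy : φ y = 0 := by
    have := hso y y
    rw [hs0, hBsymm y u] at this
    have h2 : φ y * B u y = 0 := by linear_combination this / 2
    simpa [hy] using h2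
  ext x
  have := hso x y
  rw [hs0, hφy] at this
  have h2 : φ x = 0 := by simpa [hy] using this
  rw [hTv, hs0, h2]; simp

lemma Good.star (h : Good B Ω A C) (hA : ∀ u w, A (u ⊗ₜ w) (u ⊗ₜ w) = 0)
    (f : U →ₗ[ℂ] ℂ) (u v : U) (w w' : W) :
    (2 * f (A (u ⊗ₜ w) (v ⊗ₜ w') u)) • w + f v • C (u ⊗ₜ w) (u ⊗ₜ w) w'
      + (2 * f u) • C (u ⊗ₜ w) (v ⊗ₜ w') w = 0 := by
  have := h.contractU f u u v w w w'
  rw [h.symC (v ⊗ₜ w') (u ⊗ₜ w), h.symA (v ⊗ₜ w') (u ⊗ₜ w), hA] at this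
  simp only [LinearMap.zero_apply, map_zero, zero_smul, zero_add] at this
  rw [← this]; module

/-- polarization in the first factor -/
lemma polU {X : Type*} [AddCommGroup X] [Module ℂ X]
    {D : (U ⊗[ℂ] W) →ₗ[ℂ] (U ⊗[ℂ] W) →ₗ[ℂ] X} (hs : ∀ x y, D x y = D y x)
    (hD : ∀ u w, D (u ⊗ₜ w) (u ⊗ₜ w) = 0) (u v : U) (w : W) :
    D (u ⊗ₜ w) (v ⊗ₜ w) = 0 := by
  have := hD (u + v) w
  simp only [TensorProduct.add_tmul, map_add, LinearMap.add_apply, hD, hs (v ⊗ₜ w) (u ⊗ₜ w)] at this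
  simpa [← two_smul ℂ] using this

lemma polW {X : Type*} [AddCommGroup X] [Module ℂ X]
    {D : (U ⊗[ℂ] W) →ₗ[ℂ] (U ⊗[ℂ] W) →ₗ[ℂ] X} (hs : ∀ x y, D x y = D y x)
    (hD : ∀ u w, D (u ⊗ₜ w) (u ⊗ₜ w) = 0) (u v : U) (w w' : W) :
    D (u ⊗ₜ w) (v ⊗ₜ w') = - D (u ⊗ₜ w') (v ⊗ₜ w) := by
  have := polU hs hD u v (w + w')
  simp only [TensorProduct.tmul_add, map_add, LinearMap.add_apply, polU hs hD] at this
  rw [eq_neg_iff_add_eq_zero]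
  rw [← this]; abel

lemma sympl_lemma [Nontrivial W] (hΩalt : ∀ x : W, Ω x x = 0)
    (hΩnd : ∀ x : W, (∀ y : W, Ω x y = 0) → x = 0)
    (c : W →ₗ[ℂ] W →ₗ[ℂ] ℂ) (hc : ∀ x, c x x = 0)
    (hcΩ : ∀ x y z, c x y * Ω x z = c x z * Ω x y) : ∃ κ : ℂ, ∀ x y, c x y = κ * Ω x y := by
  obtain ⟨p, hp⟩ := exists_ne (0 : W)
  obtain ⟨q, hq⟩ : ∃ q, Ω p q ≠ 0 := by
    by_contra! hc
    exact hp (hΩnd p hc)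
  have skΩ : ∀ x y, Ω x y = - Ω y x := by
    intro x y
    have := hΩalt (x + y)
    simp only [map_add, LinearMap.add_apply, hΩalt] at this
    linear_combination this
  have skc : ∀ x y, c x y = - c y x := by
    intro x y
    have := hc (x + y)
    simp only [map_add, LinearMap.add_apply, hc] at this
    linear_combination this
  refine ⟨c p q / Ω p q, ?_⟩
  have hpx : ∀ x, c p x * Ω p q = c p q * Ω p x := fun x => hcΩ p x q
  have hqx : ∀ x, c x q * Ω p q = c p q * Ω x q := by
    intro x
    have := hcΩ q x p
    rw [skc q x, skc q p, skΩ q x, skΩ q p] at this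
    linear_combination this
  have gen : ∀ x y, Ω x q ≠ 0 → c x y * Ω p q = c p q * Ω x y := by
    intro x y hx
    have h1 := hcΩ x y q
    apply mul_right_cancel₀ hx
    linear_combination Ω p q * h1 + Ω x y * hqx x
  intro x y
  rw [div_mul_eq_mul_div, eq_div_iff hq]
  by_cases hx : Ω x q = 0
  · have := gen (x + p) y (by simpa [hx] using hq)
    simp only [map_add, LinearMap.add_apply] at this
    linear_combination this - hpx y
  · exact gen x y hx

lemma Good.main1 (h : Good B Ω A C) (hU : 3 ≤ Module.finrank ℂ U) (hW : 4 ≤ Module.finrank ℂ W)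
    (hBsymm : ∀ x y : U, B x y = B y x)
    (hBnd : ∀ x : U, (∀ y : U, B x y = 0) → x = 0)
    (hΩalt : ∀ x : W, Ω x x = 0)
    (hΩnd : ∀ x : W, (∀ y : W, Ω x y = 0) → x = 0) :
    ∃ κ : ℂ, ∀ u w w', C (u ⊗ₜ w) (u ⊗ₜ w) w' = (κ * B u u * Ω w w') • w := by
  have hA := h.A_sq hU hW hBsymm hBnd
  obtain ⟨e, he⟩ := exists_onb B hBsymm hBnd
  have : Nontrivial W := Module.nontrivial_of_finrank_pos (R := ℂ) (by omega)
  let i : Fin (Module.finrank ℂ U) := ⟨0, by omega⟩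
  let j : Fin (Module.finrank ℂ U) := ⟨1, by omega⟩
  have hij : j ≠ i := by simp [i, j]
  have skΩ : ∀ x y, Ω x y = - Ω y x := by
    intro x y
    have := hΩalt (x + y)
    simp only [map_add, LinearMap.add_apply, hΩalt] at this
    linear_combination this
  have skB : ∀ x y u, B u (A x y u) = 0 := by
    intro x y u
    have := h.so x y u u
    rw [hBsymm (A x y u) u] at this
    linear_combination this / 2
  -- null vectors
  have hnull : ∀ u w w', B u u = 0 → C (u ⊗ₜ w) (u ⊗ₜ w) w' = 0 := by
    intro u w w' hu
    by_cases hu0 : u = 0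
    · simp [hu0]
    obtain ⟨v, hv⟩ : ∃ v, B u v ≠ 0 := by
      by_contra! hc
      exact hu0 (hBnd u hc)
    have := h.star hA (B u) u v w w'
    rw [skB, hu] at this
    simpa [hv] using this
  have hCB : ∀ u w w', C (u ⊗ₜ w) (u ⊗ₜ w) w' = B u u • C (e i ⊗ₜ w) (e i ⊗ₜ w) w' := by
    intro u w w'
    rw [← sub_eq_zero, ← Module.forall_dual_apply_eq_zero_iff ℂ]
    intro g
    let b : U →ₗ[ℂ] U →ₗ[ℂ] ℂ := LinearMap.mk₂ ℂ
      (fun x y => g (C (x ⊗ₜ w) (y ⊗ₜ w) w'))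
      (by intros; simp [TensorProduct.add_tmul])
      (by intros; simp [← TensorProduct.smul_tmul'])
      (by intros; simp [TensorProduct.add_tmul])
      (by intros; simp [← TensorProduct.smul_tmul'])
    have := null_lemma B hBsymm e he i b
      (by intro x y; simp only [b, LinearMap.mk₂_apply]; rw [h.symC])
      (by intro u hu; simp only [b, LinearMap.mk₂_apply]; rw [hnull u w w' hu, map_zero]) u u
    simp only [b, LinearMap.mk₂_apply] at this
    simp [this]
  let c : W →ₗ[ℂ] W →ₗ[ℂ] ℂ := LinearMap.mk₂ ℂ
      (fun w w' => -2 * B (e j) (A (e i ⊗ₜ w) (e j ⊗ₜ w') (e i)))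
      (by intros; simp [TensorProduct.tmul_add]; ring)
      (by intros; simp; ring)
      (by intros; simp [TensorProduct.tmul_add]; ring)
      (by intros; simp; ring)
  have hCc : ∀ w w', C (e i ⊗ₜ w) (e i ⊗ₜ w) w' = c w w' • w := by
    intro w w'
    have := h.star hA (B (e j)) (e i) (e j) w w'
    simp only [he, if_neg hij, if_true, one_smul, mul_zero, zero_smul, add_zero] at this
    simp only [c, LinearMap.mk₂_apply]
    rw [← sub_eq_zero, ← this]; module
  obtain ⟨κ, hκ⟩ := sympl_lemma hΩalt hΩnd c
    (by intro x
        simp only [c, LinearMap.mk₂_apply]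
        rw [polU h.symA hA]; simp)
    (by intro x y z
        have := h.sp (e i ⊗ₜ x) (e i ⊗ₜ x) y z
        rw [hCc, hCc] at this
        simp only [map_smul, LinearMap.smul_apply, smul_eq_mul] at this
        rw [skΩ y x] at this
        linear_combination this)
  refine ⟨κ, fun u w w' => ?_⟩
  rw [hCB, hCc, hκ, smul_smul]
  congr 1; ring

lemma Good.main2 (h : Good B Ω A C) (hU : 3 ≤ Module.finrank ℂ U) (hW : 4 ≤ Module.finrank ℂ W)
    (hBsymm : ∀ x y : U, B x y = B y x)
    (hBnd : ∀ x : U, (∀ y : U, B x y = 0) → x = 0)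
    (hΩalt : ∀ x : W, Ω x x = 0)
    (hΩnd : ∀ x : W, (∀ y : W, Ω x y = 0) → x = 0)
    (hC : ∀ u w, C (u ⊗ₜ w) (u ⊗ₜ w) = 0) (u v : U) (w w' : W) :
    A (u ⊗ₜ w) (v ⊗ₜ w') = 0 ∧ C (u ⊗ₜ w) (v ⊗ₜ w') = 0 := by
  have hA := h.A_sq hU hW hBsymm hBnd
  obtain ⟨e, he⟩ := exists_onb B hBsymm hBnd
  have skΩ : ∀ x y, Ω x y = - Ω y x := by
    intro x y
    have := hΩalt (x + y)
    simp only [map_add, LinearMap.add_apply, hΩalt] at this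
    linear_combination this
  have skB : ∀ x y u, B u (A x y u) = 0 := by
    intro x y u
    have := h.so x y u u
    rw [hBsymm (A x y u) u] at this
    linear_combination this / 2
  have hC1 : ∀ u v w w', C (u ⊗ₜ w) (v ⊗ₜ w') w = 0 := by
    intro u v w w'
    let L : U →ₗ[ℂ] W :=
      { toFun := fun u => C (u ⊗ₜ w) (v ⊗ₜ w') w
        map_add' := by intros; simp [TensorProduct.add_tmul]
        map_smul' := by intros; simp [← TensorProduct.smul_tmul'] }
    have hL : L = 0 := by
      apply e.ext
      intro k
      have := h.star hA (B (e k)) (e k) v w w'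
      rw [skB, hC, he] at this
      simpa [L] using this
    exact congrArg (fun l => l u) hL
  have hC0 : ∀ u v w w', C (u ⊗ₜ w) (v ⊗ₜ w') = 0 := by
    intro u v w₁ w₂
    let F : W → W → W → W → ℂ := fun a b c d => Ω (C (u ⊗ₜ a) (v ⊗ₜ b) c) d
    have F12 : ∀ a b c d, F a b c d = - F b a c d := by
      intro a b c d
      simp only [F]
      rw [polW h.symC hC]; simp
    have F13 : ∀ a b c d, F a b c d = - F c b a d := by
      intro a b c d
      have := hC1 u v (a + c) b
      simp only [TensorProduct.tmul_add, map_add, LinearMap.add_apply, hC1, zero_add, add_zero] at this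
      simp only [F]
      rw [eq_neg_iff_add_eq_zero, ← LinearMap.add_apply, ← map_add, add_comm, this]; simp
    have F34 : ∀ a b c d, F a b c d = F a b d c := by
      intro a b c d
      have := h.sp (u ⊗ₜ a) (v ⊗ₜ b) c d
      rw [skΩ c] at this
      simp only [F]
      linear_combination this
    have F23 : ∀ a b c d, F a b c d = - F a c b d := by
      intro a b c d
      rw [F12, F13, F12]; ring
    ext c
    apply hΩnd
    intro d
    have : F w₁ w₂ c d = - F w₁ w₂ c d := by
      conv_lhs => rw [F23, F34, F23, F34, F23, F34]
      ring
    change F w₁ w₂ c d = 0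
    linear_combination this / 2
  refine ⟨?_, hC0 u v w w'⟩
  obtain ⟨g, w₃, h1, h2, h3⟩ := exists_sep hW w w'
  ext x
  have := h.contractW g u v x w w' w₃
  simpa [h1, h2, h3, hC0] using this

/-- The standard skew-curvature tensor, `so` part. -/
noncomputable def wedgeB (B : U →ₗ[ℂ] U →ₗ[ℂ] ℂ) : U →ₗ[ℂ] U →ₗ[ℂ] Module.End ℂ U :=
  LinearMap.mk₂ ℂ (fun u v => (B u).smulRight v - (B v).smulRight u)
    (by intros; ext; simp [add_smul]; abel)
    (by intros; ext; simp [smul_smul, smul_sub, mul_comm])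
    (by intros; ext; simp [add_smul]; abel)
    (by intros; ext; simp [smul_smul, smul_sub, mul_comm])

noncomputable def symΩ (Ω : W →ₗ[ℂ] W →ₗ[ℂ] ℂ) : W →ₗ[ℂ] W →ₗ[ℂ] Module.End ℂ W :=
  LinearMap.mk₂ ℂ (fun u v => (Ω u).smulRight v + (Ω v).smulRight u)
    (by intros; ext; simp [add_smul]; abel)
    (by intros; ext; simp [smul_smul, smul_add, mul_comm])
    (by intros; ext; simp [add_smul]; abel)
    (by intros; ext; simp [smul_smul, smul_add, mul_comm])

noncomputable def stdA (B : U →ₗ[ℂ] U →ₗ[ℂ] ℂ) (Ω : W →ₗ[ℂ] W →ₗ[ℂ] ℂ) :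
    (U ⊗[ℂ] W) →ₗ[ℂ] (U ⊗[ℂ] W) →ₗ[ℂ] Module.End ℂ (U ⊗[ℂ] W) :=
  (TensorProduct.map₂ (wedgeB B)
    (Ω.compr₂ (LinearMap.toSpanSingleton ℂ (Module.End ℂ W) LinearMap.id))).compr₂
      (TensorProduct.homTensorHomMap (RingHom.id ℂ) U W U W)

noncomputable def stdC (B : U →ₗ[ℂ] U →ₗ[ℂ] ℂ) (Ω : W →ₗ[ℂ] W →ₗ[ℂ] ℂ) :
    (U ⊗[ℂ] W) →ₗ[ℂ] (U ⊗[ℂ] W) →ₗ[ℂ] Module.End ℂ (U ⊗[ℂ] W) :=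
  (TensorProduct.map₂
    (B.compr₂ (LinearMap.toSpanSingleton ℂ (Module.End ℂ U) LinearMap.id)) (symΩ Ω)).compr₂
      (TensorProduct.homTensorHomMap (RingHom.id ℂ) U W U W)

noncomputable def stdR (B : U →ₗ[ℂ] U →ₗ[ℂ] ℂ) (Ω : W →ₗ[ℂ] W →ₗ[ℂ] ℂ) :
    (U ⊗[ℂ] W) →ₗ[ℂ] (U ⊗[ℂ] W) →ₗ[ℂ] Module.End ℂ (U ⊗[ℂ] W) :=
  stdA B Ω + (-1 : ℂ) • stdC B Ω

lemma stdR_apply (u₁ u₂ : U) (w₁ w₂ : W) :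
    stdR B Ω (u₁ ⊗ₜ w₁) (u₂ ⊗ₜ w₂) =
      TensorProduct.map (Ω w₁ w₂ • wedgeB B u₁ u₂) LinearMap.id +
      TensorProduct.map LinearMap.id (-(B u₁ u₂ • symΩ Ω w₁ w₂)) := by
  ext x y
  simp [stdR, stdA, stdC, TensorProduct.smul_tmul', TensorProduct.tmul_neg, sub_eq_add_neg]

/-- the algebra -/
def gset (B : U →ₗ[ℂ] U →ₗ[ℂ] ℂ) (Ω : W →ₗ[ℂ] W →ₗ[ℂ] ℂ) :
    Set (Module.End ℂ (U ⊗[ℂ] W)) :=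
      {T : Module.End ℂ (U ⊗[ℂ] W) |
        ∃ A : Module.End ℂ U, ∃ C : Module.End ℂ W,
          (∀ x y : U, B (A x) y + B x (A y) = 0) ∧
          (∀ x y : W, Ω (C x) y + Ω x (C y) = 0) ∧
          T = TensorProduct.map A LinearMap.id + TensorProduct.map LinearMap.id C}

lemma mem_span_gset {T : Module.End ℂ (U ⊗[ℂ] W)} (hT : T ∈ Submodule.span ℂ (gset B Ω)) :
    T ∈ gset B Ω := by
  induction hT using Submodule.span_induction with
  | mem x h => exact h
  | zero => exact ⟨0, 0, by simp, by simp, by simp⟩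
  | add x y _ _ hx hy =>
    obtain ⟨A, C, hA, hC, rfl⟩ := hx
    obtain ⟨A', C', hA', hC', rfl⟩ := hy
    refine ⟨A + A', C + C', ?_, ?_, ?_⟩
    · intro x y
      simp only [LinearMap.add_apply, map_add]
      linear_combination hA x y + hA' x y
    · intro x y
      simp only [LinearMap.add_apply, map_add]
      linear_combination hC x y + hC' x y
    · rw [TensorProduct.map_add_left, TensorProduct.map_add_right]; abel
  | smul a x _ hx =>
    obtain ⟨A, C, hA, hC, rfl⟩ := hx
    refine ⟨a • A, a • C, ?_, ?_, ?_⟩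
    · intro x y
      simp only [LinearMap.smul_apply, map_smul, smul_eq_mul]
      linear_combination a * hA x y
    · intro x y
      simp only [LinearMap.smul_apply, map_smul, smul_eq_mul]
      linear_combination a * hC x y
    · rw [TensorProduct.map_smul_left, TensorProduct.map_smul_right, smul_add]

lemma stdR_skew (hBsymm : ∀ x y : U, B x y = B y x) (hΩalt : ∀ x : W, Ω x x = 0) :
    IsSkewCurv (Submodule.span ℂ (gset B Ω)) (stdR B Ω) := by
  have skΩ : ∀ x y, Ω x y = - Ω y x := by
    intro x y
    have := hΩalt (x + y)
    simp only [map_add, LinearMap.add_apply, hΩalt] at this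
    linear_combination this
  refine ⟨?_, ?_, ?_⟩
  · have : stdR B Ω = (stdR B Ω).flip := by
      ext u₁ w₁ u₂ w₂ x y
      simp only [TensorProduct.AlgebraTensorModule.curry_apply, TensorProduct.curry_apply,
        LinearMap.coe_restrictScalars, LinearMap.flip_apply, stdR_apply, wedgeB, symΩ,
        LinearMap.mk₂_apply, LinearMap.coe_comp, Function.comp_apply, LinearMap.compr₂_apply]
      rw [skΩ w₂ w₁, hBsymm u₂ u₁, add_comm ((Ω w₂).smulRight w₁),
        ← neg_sub ((B u₁).smulRight u₂), neg_smul_neg]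
    intro x y
    conv_lhs => rw [this]
    rfl
  · intro x y
    induction x with
    | zero => simp
    | add x x' hx hx' => rw [map_add, LinearMap.add_apply]; exact Submodule.add_mem _ hx hx'
    | tmul u₁ w₁ =>
      induction y with
      | zero => simp
      | add x x' hx hx' => rw [map_add]; exact Submodule.add_mem _ hx hx'
      | tmul u₂ w₂ =>
        rw [stdR_apply]
        apply Submodule.subset_span
        refine ⟨_, _, ?_, ?_, rfl⟩
        · intro x y
          simp [wedgeB, hBsymm _ x]
          ring
        · intro x y
          simp [symΩ, skΩ x]
          ring
  · intro x y z
    induction x with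
    | zero => simp
    | add x x' hx hx' =>
      simp only [map_add, LinearMap.add_apply]
      have := congrArg₂ (· + ·) hx hx'
      simp only [add_zero] at this
      rw [← this]; abel
    | tmul u₁ w₁ =>
      induction y with
      | zero => simp
      | add x x' hx hx' =>
        simp only [map_add, LinearMap.add_apply]
        have := congrArg₂ (· + ·) hx hx'
        simp only [add_zero] at this
        rw [← this]; abel
      | tmul u₂ w₂ =>
        induction z with
        | zero => simp
        | add x x' hx hx' =>
          simp only [map_add, LinearMap.add_apply]
          have := congrArg₂ (· + ·) hx hx'
          simp only [add_zero] at this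
          rw [← this]; abel
        | tmul u₃ w₃ =>
          simp only [stdR_apply, wedgeB, symΩ, LinearMap.mk₂_apply, LinearMap.add_apply,
            TensorProduct.map_tmul, LinearMap.smul_apply, LinearMap.sub_apply, LinearMap.neg_apply,
            LinearMap.smulRight_apply, LinearMap.id_apply, TensorProduct.tmul_add,
            TensorProduct.tmul_neg, TensorProduct.sub_tmul, TensorProduct.tmul_smul,
            ← TensorProduct.smul_tmul', smul_sub, smul_add]
          rw [hBsymm u₃ u₁, hBsymm u₃ u₂, hBsymm u₂ u₁, skΩ w₃ w₁, skΩ w₃ w₂, skΩ w₂ w₁]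
          module

lemma eq_of_add_smul {V : Type*} [AddCommGroup V] [Module ℂ V]
    {R S : V →ₗ[ℂ] V →ₗ[ℂ] Module.End ℂ V} {c : ℂ} (h : R + c • S = 0) : R = (-c) • S := by
  ext x y z
  have h1 : R x y z + c • S x y z = 0 := by
    have := congrArg (fun T => T x y z) h
    simpa using this
  have h2 : R x y z = (-c) • S x y z := by
    rw [neg_smul, eq_neg_iff_add_eq_zero, h1]
  simpa using h2

lemma IsSkewCurv.sub_smul {V : Type*} [AddCommGroup V] [Module ℂ V]
    {h : Submodule ℂ (Module.End ℂ V)} {R S : V →ₗ[ℂ] V →ₗ[ℂ] Module.End ℂ V}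
    (hR : IsSkewCurv h R) (hS : IsSkewCurv h S) (c : ℂ) : IsSkewCurv h (R + c • S) := by
  obtain ⟨r1, r2, r3⟩ := hR
  obtain ⟨s1, s2, s3⟩ := hS
  refine ⟨fun x y => ?_, fun x y => ?_, fun x y z => ?_⟩
  · simp only [LinearMap.add_apply, LinearMap.smul_apply]
    rw [r1 x y, s1 x y]
  · simp only [LinearMap.add_apply, LinearMap.smul_apply]
    exact Submodule.add_mem _ (r2 x y) (Submodule.smul_mem _ c (s2 x y))
  · simp only [LinearMap.add_apply, LinearMap.smul_apply]
    have : R x y z + R y z x + R z x y + c • (S x y z + S y z x + S z x y) = 0 := by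
      rw [r3, s3]; simp
    rw [← this]; module

/-- extraction of the `sp` component -/
noncomputable def cpart (B : U →ₗ[ℂ] U →ₗ[ℂ] ℂ) (u₀ : U) :
    Module.End ℂ (U ⊗[ℂ] W) →ₗ[ℂ] Module.End ℂ W where
  toFun T := (TensorProduct.lid ℂ W).toLinearMap ∘ₗ (B u₀).rTensor W ∘ₗ T ∘ₗ
    TensorProduct.mk ℂ U W u₀
  map_add' S T := by ext; simp
  map_smul' c T := by ext; simp

/-- extraction of the `so` component -/
noncomputable def apart (B : U →ₗ[ℂ] U →ₗ[ℂ] ℂ) (u₀ : U) (φ : W →ₗ[ℂ] ℂ) (w₀ : W) :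
    Module.End ℂ (U ⊗[ℂ] W) →ₗ[ℂ] Module.End ℂ U where
  toFun T := (TensorProduct.rid ℂ U).toLinearMap ∘ₗ φ.lTensor U ∘ₗ T ∘ₗ
    (TensorProduct.mk ℂ U W).flip w₀ - φ (cpart B u₀ T w₀) • LinearMap.id
  map_add' S T := by ext; simp [add_smul]; abel
  map_smul' c T := by ext; simp [smul_smul, smul_sub]

lemma parts {u₀ : U} {φ : W →ₗ[ℂ] ℂ} {w₀ : W} (hu₀ : B u₀ u₀ = 1) (hφ : φ w₀ = 1)
    (hBsymm : ∀ x y : U, B x y = B y x)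
    (A : Module.End ℂ U) (C : Module.End ℂ W) (hA : ∀ x y : U, B (A x) y + B x (A y) = 0) :
    cpart B u₀ (TensorProduct.map A LinearMap.id + TensorProduct.map LinearMap.id C) = C ∧
    apart B u₀ φ w₀ (TensorProduct.map A LinearMap.id + TensorProduct.map LinearMap.id C) = A := by
  have h1 : B u₀ (A u₀) = 0 := by
    have := hA u₀ u₀
    rw [hBsymm (A u₀) u₀] at this
    linear_combination this / 2
  have h2 : cpart B u₀ (TensorProduct.map A LinearMap.id + TensorProduct.map LinearMap.id C) = C := by
    ext w
    simp [cpart, h1, hu₀]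
  refine ⟨h2, ?_⟩
  ext u
  simp [apart, h2, hφ]

lemma good_of_skew {u₀ : U} {φ : W →ₗ[ℂ] ℂ} {w₀ : W} (hu₀ : B u₀ u₀ = 1) (hφ : φ w₀ = 1)
    (hBsymm : ∀ x y : U, B x y = B y x)
    {R : (U ⊗[ℂ] W) →ₗ[ℂ] (U ⊗[ℂ] W) →ₗ[ℂ] Module.End ℂ (U ⊗[ℂ] W)}
    (hR : IsSkewCurv (Submodule.span ℂ (gset B Ω)) R) :
    Good B Ω (R.compr₂ (apart B u₀ φ w₀)) (R.compr₂ (cpart B u₀)) ∧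
    ∀ x y u w, R x y (u ⊗ₜ w) = apart B u₀ φ w₀ (R x y) u ⊗ₜ w + u ⊗ₜ cpart B u₀ (R x y) w := by
  obtain ⟨h1, h2, h3⟩ := hR
  have key : ∀ x y, (∀ u v, B (apart B u₀ φ w₀ (R x y) u) v + B u (apart B u₀ φ w₀ (R x y) v) = 0)
      ∧ (∀ u v, Ω (cpart B u₀ (R x y) u) v + Ω u (cpart B u₀ (R x y) v) = 0) ∧
      ∀ u w, R x y (u ⊗ₜ w) = apart B u₀ φ w₀ (R x y) u ⊗ₜ w + u ⊗ₜ cpart B u₀ (R x y) w := by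
    intro x y
    obtain ⟨A, C, hA, hC, hT⟩ := mem_span_gset (h2 x y)
    obtain ⟨p1, p2⟩ := parts hu₀ hφ hBsymm A C hA
    rw [hT, p1, p2]
    exact ⟨hA, hC, fun u w => by simp⟩
  refine ⟨⟨?_, ?_, fun x y => (key x y).1, fun x y => (key x y).2.1, ?_⟩, fun x y => (key x y).2.2⟩
  · intro x y; simp only [LinearMap.compr₂_apply]; rw [h1]
  · intro x y; simp only [LinearMap.compr₂_apply]; rw [h1]
  · intro u₁ u₂ u₃ w₁ w₂ w₃
    have := h3 (u₁ ⊗ₜ w₁) (u₂ ⊗ₜ w₂) (u₃ ⊗ₜ w₃)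
    rw [(key _ _).2.2, (key _ _).2.2, (key _ _).2.2] at this
    exact this

end helpers

/-- for `U` of dimension `n ≥ 3` with a nondegenerate symmetric form
`B`, `W` of dimension `2m` (`m ≥ 2`) with a nondegenerate alternating form `Ω`,
the space `𝓡̄(𝔤)` of skew-curvature tensors of type
`𝔤 = so(B) ⊗ id + id ⊗ sp(Ω) ⊆ End(U ⊗ W)` is one-dimensional. -/
theorem stmt13 {U W : Type*}
    [AddCommGroup U] [Module ℂ U] [FiniteDimensional ℂ U]
    [AddCommGroup W] [Module ℂ W] [FiniteDimensional ℂ W]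
    (n m : ℕ) (hn : 3 ≤ n) (hm : 2 ≤ m)
    (hdimU : Module.finrank ℂ U = n) (hdimW : Module.finrank ℂ W = 2 * m)
    (B : U →ₗ[ℂ] U →ₗ[ℂ] ℂ)
    (hBsymm : ∀ x y : U, B x y = B y x)
    (hBnd : ∀ x : U, (∀ y : U, B x y = 0) → x = 0)
    (Ω : W →ₗ[ℂ] W →ₗ[ℂ] ℂ)
    (hΩalt : ∀ x : W, Ω x x = 0)
    (hΩnd : ∀ x : W, (∀ y : W, Ω x y = 0) → x = 0)
    (g : Submodule ℂ (Module.End ℂ (U ⊗[ℂ] W)))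
    (hg : g = Submodule.span ℂ
      {T : Module.End ℂ (U ⊗[ℂ] W) |
        ∃ A : Module.End ℂ U, ∃ C : Module.End ℂ W,
          (∀ x y : U, B (A x) y + B x (A y) = 0) ∧
          (∀ x y : W, Ω (C x) y + Ω x (C y) = 0) ∧
          T = TensorProduct.map A LinearMap.id + TensorProduct.map LinearMap.id C}) :
    ∃ R₀ : (U ⊗[ℂ] W) →ₗ[ℂ] (U ⊗[ℂ] W) →ₗ[ℂ] Module.End ℂ (U ⊗[ℂ] W),
      IsSkewCurv g R₀ ∧ R₀ ≠ 0 ∧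
      ∀ R, IsSkewCurv g R → ∃ c : ℂ, R = c • R₀ := by
  have hU : 3 ≤ Module.finrank ℂ U := by omega
  have hW : 4 ≤ Module.finrank ℂ W := by omega
  change g = Submodule.span ℂ (gset B Ω) at hg
  subst hg
  have skΩ : ∀ x y, Ω x y = - Ω y x := by
    intro x y
    have := hΩalt (x + y)
    simp only [map_add, LinearMap.add_apply, hΩalt] at this
    linear_combination this
  obtain ⟨e, he⟩ := exists_onb B hBsymm hBnd
  obtain ⟨φ, w₀, -, -, hφ⟩ := exists_sep hW 0 0
  let i : Fin (Module.finrank ℂ U) := ⟨0, by omega⟩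
  have hu₀ : B (e i) (e i) = 1 := by simp [he]
  have hstd := stdR_skew hBsymm hΩalt
  have hso : ∀ u₁ u₂ w₁ w₂ x y, B ((Ω w₁ w₂ • wedgeB B u₁ u₂) x) y
      + B x ((Ω w₁ w₂ • wedgeB B u₁ u₂) y) = 0 := by
    intro u₁ u₂ w₁ w₂ x y
    simp [wedgeB, hBsymm _ x]
    ring
  have hc : ∀ u w w', cpart B (e i) (stdR B Ω (u ⊗ₜ w) (u ⊗ₜ w)) w' =
      (-2 * B u u * Ω w w') • w := by
    intro u w w'
    rw [stdR_apply, (parts hu₀ hφ hBsymm _ _ (hso u u w w)).1]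
    simp only [symΩ, LinearMap.mk₂_apply, LinearMap.neg_apply, LinearMap.smul_apply,
      LinearMap.add_apply, LinearMap.smulRight_apply]
    module
  refine ⟨stdR B Ω, hstd, ?_, ?_⟩
  · intro h0
    have hw₀ : w₀ ≠ 0 := by rintro rfl; simp at hφ
    obtain ⟨q, hq⟩ : ∃ q, Ω w₀ q ≠ 0 := by
      by_contra! hc
      exact hw₀ (hΩnd w₀ hc)
    have := hc (e i) w₀ q
    rw [h0, hu₀] at this
    simp [hq, hw₀] at this
  · intro R hR
    obtain ⟨hG, -⟩ := good_of_skew hu₀ hφ hBsymm hR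
    obtain ⟨κ, hκ⟩ := hG.main1 hU hW hBsymm hBnd hΩalt hΩnd
    refine ⟨-(κ / 2), eq_of_add_smul ?_⟩
    obtain ⟨hG', hdec⟩ := good_of_skew hu₀ hφ hBsymm (hR.sub_smul hstd (κ / 2))
    have hz := hG'.main2 hU hW hBsymm hBnd hΩalt hΩnd (by
      intro u w
      ext w'
      have h1 := hκ u w w'
      have h2 := hc u w w'
      simp only [LinearMap.compr₂_apply] at h1
      simp only [LinearMap.compr₂_apply, LinearMap.add_apply, LinearMap.smul_apply, map_add,
        map_smul, h1, h2, LinearMap.zero_apply]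
      module)
    ext u₁ w₁ u₂ w₂ u w
    have h1 := hdec (u₁ ⊗ₜ w₁) (u₂ ⊗ₜ w₂) u w
    have h2 := hz u₁ u₂ w₁ w₂
    simp only [LinearMap.compr₂_apply] at h2
    rw [h2.1, h2.2] at h1
    simpa using h1
end
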